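/- arXiv:1509.02344 — 7 statements merged into one kernel-verified Lean document; each statement's English description precedes it below -/
import Mathlib

section
/- Let ε₁, ε₂ ∈ {−1, +1} and let S_ε := {ω ∈ S² : ε₁ω₁ ≥ 0 and ε₂ω₂ ≥ 0} be the corresponding quarter-sphere. For ψ⁰ ∈ ℝ and ψ¹ = (ψ¹₁, ψ¹₂) ∈ ℝ², there exists a finite nonnegative Borel measure μ on S² supported in S_ε with μ(S²) = ψ⁰ and ∫_{S²} Ω dμ = ψ¹ if and only if ‖ψ¹‖₂ ≤ ψ⁰, ε₁ψ¹₁ ≥ 0 and ε₂ψ¹₂ ≥ 0. (First-order quarter-moment realizability.) -/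
open MeasureTheory Real

noncomputable section

/-- First-order quarter-moment realizability: a moment vector `(ψ₀, ψ₁, ψ₂)` is realizable by a
finite nonnegative Borel measure supported in the quarter-sphere
`S_ε = {ω ∈ S² : ε₁ ω₁ ≥ 0, ε₂ ω₂ ≥ 0}` iff `‖(ψ₁,ψ₂)‖₂ ≤ ψ₀`, `ε₁ ψ₁ ≥ 0` and `ε₂ ψ₂ ≥ 0`. -/
theorem quarter_moment_realizability_first_order
    (ε₁ ε₂ : ℝ) (hε₁ : ε₁ = 1 ∨ ε₁ = -1) (hε₂ : ε₂ = 1 ∨ ε₂ = -1)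
    (ψ₀ ψ₁ ψ₂ : ℝ) :
    (∃ μ : Measure (EuclideanSpace ℝ (Fin 3)), IsFiniteMeasure μ ∧
        μ {ω | ¬ (‖ω‖ = 1 ∧ 0 ≤ ε₁ * ω 0 ∧ 0 ≤ ε₂ * ω 1)} = 0 ∧
        (μ (Metric.sphere (0 : EuclideanSpace ℝ (Fin 3)) 1)).toReal = ψ₀ ∧
        (∫ ω, ω 0 ∂μ) = ψ₁ ∧ (∫ ω, ω 1 ∂μ) = ψ₂) ↔
      (Real.sqrt (ψ₁ ^ 2 + ψ₂ ^ 2) ≤ ψ₀ ∧ 0 ≤ ε₁ * ψ₁ ∧ 0 ≤ ε₂ * ψ₂) := by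
  constructor
  · rintro ⟨μ, hfin, hsupp, h0, h1, h2⟩
    have hae : ∀ᵐ ω ∂μ, ‖ω‖ = 1 ∧ 0 ≤ ε₁ * ω 0 ∧ 0 ≤ ε₂ * ω 1 := hsupp
    have hsph : μ (Metric.sphere (0 : EuclideanSpace ℝ (Fin 3)) 1) = μ Set.univ := by
      apply measure_congr
      filter_upwards [hae] with ω hω
      apply propext
      change ω ∈ Metric.sphere (0 : EuclideanSpace ℝ (Fin 3)) 1 ↔ ω ∈ Set.univ
      simp [hω.1]
    have hsq : ∀ ω : EuclideanSpace ℝ (Fin 3), ‖ω‖ = 1 → ω 0 ^ 2 + ω 1 ^ 2 + ω 2 ^ 2 = 1 := by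
      intro ω hω
      have := EuclideanSpace.real_norm_sq_eq ω
      rw [hω, Fin.sum_univ_three] at this
      linarith
    have hi : ∀ i : Fin 3, Integrable (fun ω : EuclideanSpace ℝ (Fin 3) => ω i) μ := by
      intro i
      refine Integrable.of_bound (C := 1) ?_ ?_
      · exact (by fun_prop : Continuous (fun ω : EuclideanSpace ℝ (Fin 3) => ω i)).aestronglyMeasurable
      · filter_upwards [hae] with ω hω
        have := PiLp.norm_apply_le ω i
        rwa [hω.1] at this
    refine ⟨?_, ?_, ?_⟩
    · set r := Real.sqrt (ψ₁ ^ 2 + ψ₂ ^ 2) with hr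
      have hr0 : 0 ≤ r := Real.sqrt_nonneg _
      have hr2 : r ^ 2 = ψ₁ ^ 2 + ψ₂ ^ 2 := Real.sq_sqrt (by positivity)
      have hlin : ∫ ω : EuclideanSpace ℝ (Fin 3), (ψ₁ * ω 0 + ψ₂ * ω 1) ∂μ = ψ₁ * ψ₁ + ψ₂ * ψ₂ := by
        rw [integral_add ((hi 0).const_mul _) ((hi 1).const_mul _), integral_const_mul,
          integral_const_mul, h1, h2]
      have hle : ∫ ω : EuclideanSpace ℝ (Fin 3), (ψ₁ * ω 0 + ψ₂ * ω 1) ∂μ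
          ≤ ∫ _ω : EuclideanSpace ℝ (Fin 3), r ∂μ := by
        apply integral_mono_ae (((hi 0).const_mul _).add ((hi 1).const_mul _)) (integrable_const _)
        filter_upwards [hae] with ω hω
        have h3 := hsq ω hω.1
        apply abs_le_of_sq_le_sq' _ hr0 |>.2
        change (ψ₁ * ω 0 + ψ₂ * ω 1) ^ 2 ≤ r ^ 2
        rw [hr2]
        nlinarith [sq_nonneg (ψ₁ * ω 1 - ψ₂ * ω 0),
          mul_nonneg (add_nonneg (sq_nonneg ψ₁) (sq_nonneg ψ₂)) (sq_nonneg (ω 2))]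
      rw [hlin, integral_const, Measure.real, ← hsph, h0, smul_eq_mul] at hle
      have hψ : 0 ≤ ψ₀ := h0 ▸ ENNReal.toReal_nonneg
      by_contra! hlt
      nlinarith
    · rw [← h1, ← integral_const_mul]
      exact integral_nonneg_of_ae (hae.mono fun ω hω => hω.2.1)
    · rw [← h2, ← integral_const_mul]
      exact integral_nonneg_of_ae (hae.mono fun ω hω => hω.2.2)
  · rintro ⟨hr, hp1, hp2⟩
    have hψ : 0 ≤ ψ₀ := (Real.sqrt_nonneg _).trans hr
    have hsq : ψ₁ ^ 2 + ψ₂ ^ 2 ≤ ψ₀ ^ 2 := (Real.sqrt_le_left hψ).1 hr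
    have e1 : ψ₀ * (ψ₁ / ψ₀) = ψ₁ := by
      rcases eq_or_ne ψ₀ 0 with h | h
      · subst h
        have : ψ₁ = 0 := by nlinarith
        simp [this]
      · field_simp
    have e2 : ψ₀ * (ψ₂ / ψ₀) = ψ₂ := by
      rcases eq_or_ne ψ₀ 0 with h | h
      · subst h
        have : ψ₂ = 0 := by nlinarith
        simp [this]
      · field_simp
    have hxy : 0 ≤ 1 - (ψ₁ / ψ₀) ^ 2 - (ψ₂ / ψ₀) ^ 2 := by
      have : (ψ₁ ^ 2 + ψ₂ ^ 2) / ψ₀ ^ 2 ≤ 1 := div_le_one_of_le₀ hsq (by positivity)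
      rw [div_pow, div_pow]
      rw [add_div] at this
      linarith
    let p : EuclideanSpace ℝ (Fin 3) :=
      !₂[ψ₁ / ψ₀, ψ₂ / ψ₀, Real.sqrt (1 - (ψ₁ / ψ₀) ^ 2 - (ψ₂ / ψ₀) ^ 2)]
    have p0 : p 0 = ψ₁ / ψ₀ := rfl
    have p1 : p 1 = ψ₂ / ψ₀ := rfl
    have p2 : p 2 = Real.sqrt (1 - (ψ₁ / ψ₀) ^ 2 - (ψ₂ / ψ₀) ^ 2) := rfl
    have pn : ‖p‖ = 1 := by
      have h := EuclideanSpace.real_norm_sq_eq p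
      rw [Fin.sum_univ_three, p0, p1, p2, Real.sq_sqrt hxy] at h
      have : ‖p‖ ^ 2 = 1 := by rw [h]; ring
      exact (pow_eq_one_iff_of_nonneg (norm_nonneg _) two_ne_zero).1 this
    refine ⟨ENNReal.ofReal ψ₀ • Measure.dirac p, ?_, ?_, ?_, ?_, ?_⟩
    · exact Measure.smul_finite _ ENNReal.ofReal_ne_top
    · rw [Measure.smul_apply, Measure.dirac_apply]
      rw [Set.indicator_of_notMem]
      · simp
      · simp only [Set.mem_setOf_eq, not_not]
        refine ⟨pn, ?_, ?_⟩
        · rw [p0, ← mul_div_assoc]; exact div_nonneg hp1 hψ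
        · rw [p1, ← mul_div_assoc]; exact div_nonneg hp2 hψ
    · rw [Measure.smul_apply, Measure.dirac_apply, Set.indicator_of_mem (by simp [pn])]
      simp [hψ]
    · rw [integral_smul_measure, integral_dirac, ENNReal.toReal_ofReal hψ, p0, smul_eq_mul, e1]
    · rw [integral_smul_measure, integral_dirac, ENNReal.toReal_ofReal hψ, p1, smul_eq_mul, e2]
end
end

section
/- For a vector (ψ⁰, ψx⁺, ψx⁻, ψy⁺, ψy⁻) ∈ ℝ⁵ there exists a finite nonnegative Borel measure μ on S² with μ(S²) = ψ⁰, ∫_{{ω₁>0}} ω₁ dμ = ψx⁺, ∫_{{ω₁<0}} ω₁ dμ = ψx⁻, ∫_{{ω₂>0}} ω₂ dμ = ψy⁺ and ∫_{{ω₂<0}} ω₂ dμ = ψy⁻ if and only if √((ψx⁺ − ψx⁻)² + (ψy⁺ − ψy⁻)²) ≤ ψ⁰, ψx⁺ ≥ 0, ψy⁺ ≥ 0, ψx⁻ ≤ 0 and ψy⁻ ≤ 0. (First-order mixed-moment realizability.) -/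
open MeasureTheory Real

noncomputable section

lemma mm_pos (μ : Measure (EuclideanSpace ℝ (Fin 3))) (i : Fin 3) :
    (∫ ω in {ω : EuclideanSpace ℝ (Fin 3) | 0 < ω i}, ω i ∂μ) = ∫ ω, max (ω i) 0 ∂μ := by
  rw [← integral_indicator (measurableSet_lt (by fun_prop) (by fun_prop))]
  congr 1; ext ω
  by_cases h : 0 < ω i
  · simp [Set.indicator, h, h.le]
  · simp [Set.indicator, h, not_lt.1 h]

lemma mm_neg (μ : Measure (EuclideanSpace ℝ (Fin 3))) (i : Fin 3) :
    (∫ ω in {ω : EuclideanSpace ℝ (Fin 3) | ω i < 0}, ω i ∂μ) = ∫ ω, min (ω i) 0 ∂μ := by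
  rw [← integral_indicator (measurableSet_lt (by fun_prop) (by fun_prop))]
  congr 1; ext ω
  by_cases h : ω i < 0
  · simp [Set.indicator, h, h.le]
  · simp [Set.indicator, h, not_lt.1 h]

def mmM (c : Fin 5 → ℝ) (p : Fin 5 → EuclideanSpace ℝ (Fin 3)) :
    Measure (EuclideanSpace ℝ (Fin 3)) :=
  ∑ k, ENNReal.ofReal (c k) • Measure.dirac (p k)

instance mmM_fin (c : Fin 5 → ℝ) (p : Fin 5 → EuclideanSpace ℝ (Fin 3)) :
    IsFiniteMeasure (mmM c p) := by
  constructor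
  simp [mmM]

lemma mmM_int (c : Fin 5 → ℝ) (hc : ∀ k, 0 ≤ c k) (p : Fin 5 → EuclideanSpace ℝ (Fin 3))
    (f : EuclideanSpace ℝ (Fin 3) → ℝ) :
    ∫ ω, f ω ∂(mmM c p) = ∑ k, c k * f (p k) := by
  unfold mmM
  rw [integral_finsetSum_measure]
  · simp [integral_smul_measure, hc]
  · intro k _
    exact (integrable_dirac (by simp)).smul_measure (by simp)

lemma mmM_sphere (c : Fin 5 → ℝ) (p : Fin 5 → EuclideanSpace ℝ (Fin 3))
    (hp : ∀ k, p k ∈ Metric.sphere (0 : EuclideanSpace ℝ (Fin 3)) 1) :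
    mmM c p (Metric.sphere (0 : EuclideanSpace ℝ (Fin 3)) 1)ᶜ = 0 := by
  have hp' : ∀ k, ‖p k‖ = 1 := fun k => by simpa using hp k
  simp [mmM, Measure.dirac_apply, hp']

lemma mm_mass (μ : Measure (EuclideanSpace ℝ (Fin 3))) 
    (h : μ (Metric.sphere (0 : EuclideanSpace ℝ (Fin 3)) 1)ᶜ = 0) :
    (μ (Metric.sphere (0 : EuclideanSpace ℝ (Fin 3)) 1)).toReal = ∫ _ω, (1 : ℝ) ∂μ := by
  have : μ (Metric.sphere (0 : EuclideanSpace ℝ (Fin 3)) 1) = μ Set.univ :=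
    measure_of_measure_compl_eq_zero h
  rw [this]; simp [Measure.real]

lemma mm_split (s t : ℝ) (hs : 0 ≤ s) (ht : t ≤ 0) :
    ∃ p : ℝ, 0 ≤ p ∧ p ≤ 1 ∧ p * (s - t) = s ∧ (1 - p) * (s - t) = -t := by
  by_cases h : s - t = 0
  · exact ⟨1, by norm_num, le_rfl, by linarith, by linarith⟩
  · have h' : 0 < s - t := lt_of_le_of_ne (by linarith) (Ne.symm h)
    refine ⟨s / (s - t), by positivity, (div_le_one h').2 (by linarith), by field_simp, by field_simp; ring⟩

lemma mm_polar (a b : ℝ) (ha : 0 ≤ a) (hb : 0 ≤ b) :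
    ∃ u v : ℝ, 0 ≤ u ∧ 0 ≤ v ∧ u ^ 2 + v ^ 2 = 1 ∧
      √(a ^ 2 + b ^ 2) * u = a ∧ √(a ^ 2 + b ^ 2) * v = b := by
  have hsq := Real.sq_sqrt (show 0 ≤ a ^ 2 + b ^ 2 by positivity)
  have h0 := Real.sqrt_nonneg (a ^ 2 + b ^ 2)
  generalize √(a ^ 2 + b ^ 2) = R at *
  by_cases h : R = 0
  · subst h
    exact ⟨1, 0, by norm_num, by norm_num, by norm_num, by nlinarith, by nlinarith⟩
  · refine ⟨a / R, b / R, by positivity, by positivity, by field_simp; linarith,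
      by field_simp, by field_simp⟩

/-- First-order mixed-moment realizability: `(ψ⁰, ψx⁺, ψx⁻, ψy⁺, ψy⁻)` is realizable by a finite
nonnegative Borel measure on the unit sphere `S²` iff
`√((ψx⁺ − ψx⁻)² + (ψy⁺ − ψy⁻)²) ≤ ψ⁰`, `ψx⁺ ≥ 0`, `ψy⁺ ≥ 0`, `ψx⁻ ≤ 0`, `ψy⁻ ≤ 0`. -/
theorem mixed_moment_realizability_first_order
    (ψ₀ ψxp ψxm ψyp ψym : ℝ) :
    (∃ μ : Measure (EuclideanSpace ℝ (Fin 3)), IsFiniteMeasure μ ∧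
        μ (Metric.sphere (0 : EuclideanSpace ℝ (Fin 3)) 1)ᶜ = 0 ∧
        (μ (Metric.sphere (0 : EuclideanSpace ℝ (Fin 3)) 1)).toReal = ψ₀ ∧
        (∫ ω in {ω : EuclideanSpace ℝ (Fin 3) | 0 < ω 0}, ω 0 ∂μ) = ψxp ∧
        (∫ ω in {ω : EuclideanSpace ℝ (Fin 3) | ω 0 < 0}, ω 0 ∂μ) = ψxm ∧
        (∫ ω in {ω : EuclideanSpace ℝ (Fin 3) | 0 < ω 1}, ω 1 ∂μ) = ψyp ∧
        (∫ ω in {ω : EuclideanSpace ℝ (Fin 3) | ω 1 < 0}, ω 1 ∂μ) = ψym) ↔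
      (Real.sqrt ((ψxp - ψxm) ^ 2 + (ψyp - ψym) ^ 2) ≤ ψ₀ ∧
        0 ≤ ψxp ∧ 0 ≤ ψyp ∧ ψxm ≤ 0 ∧ ψym ≤ 0) := by
  constructor
  · rintro ⟨μ, hfin, hs, h0, h1, h2, h3, h4⟩
    rw [mm_mass μ hs] at h0
    rw [mm_pos] at h1 h3
    rw [mm_neg] at h2 h4
    have hae : ∀ᵐ ω ∂μ, ω ∈ Metric.sphere (0 : EuclideanSpace ℝ (Fin 3)) 1 := hs
    have hn : ∀ᵐ ω ∂μ, (ω 0) ^ 2 + (ω 1) ^ 2 ≤ 1 := by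
      filter_upwards [hae] with ω hω
      have h : ‖ω‖ = 1 := by simpa using hω
      have h' := EuclideanSpace.real_norm_sq_eq ω
      rw [h, Fin.sum_univ_three] at h'
      nlinarith [sq_nonneg (ω 2)]
    have key : ∀ f : EuclideanSpace ℝ (Fin 3) → ℝ, Measurable f → 
        (∀ ω : EuclideanSpace ℝ (Fin 3), (ω 0) ^ 2 + (ω 1) ^ 2 ≤ 1 → |f ω| ≤ 1) →
          Integrable f μ := by
      intro f hf hb
      refine Integrable.of_bound hf.aestronglyMeasurable 1 ?_
      filter_upwards [hn] with ω hω using hb ω hω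
    have b0 : ∀ ω : EuclideanSpace ℝ (Fin 3), (ω 0) ^ 2 + (ω 1) ^ 2 ≤ 1 → |ω 0| ≤ 1 :=
      fun ω h => abs_le_one_iff_mul_self_le_one.2 (by nlinarith [sq_nonneg (ω 1)])
    have b1 : ∀ ω : EuclideanSpace ℝ (Fin 3), (ω 0) ^ 2 + (ω 1) ^ 2 ≤ 1 → |ω 1| ≤ 1 :=
      fun ω h => abs_le_one_iff_mul_self_le_one.2 (by nlinarith [sq_nonneg (ω 0)])
    have hM : ∀ x : ℝ, |x| ≤ 1 → |max x 0| ≤ 1 := by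
      intro x hx; rw [abs_le] at *; constructor
      · exact le_max_of_le_right (by norm_num)
      · exact max_le hx.2 (by norm_num)
    have hm : ∀ x : ℝ, |x| ≤ 1 → |min x 0| ≤ 1 := by
      intro x hx; rw [abs_le] at *; constructor
      · exact le_min hx.1 (by norm_num)
      · exact min_le_of_right_le (by norm_num)
    have i1 : Integrable (fun ω : EuclideanSpace ℝ (Fin 3) => max (ω 0) 0) μ :=
      key _ (by fun_prop) fun ω h => hM _ (b0 ω h)
    have i2 : Integrable (fun ω : EuclideanSpace ℝ (Fin 3) => min (ω 0) 0) μ :=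
      key _ (by fun_prop) fun ω h => hm _ (b0 ω h)
    have i3 : Integrable (fun ω : EuclideanSpace ℝ (Fin 3) => max (ω 1) 0) μ :=
      key _ (by fun_prop) fun ω h => hM _ (b1 ω h)
    have i4 : Integrable (fun ω : EuclideanSpace ℝ (Fin 3) => min (ω 1) 0) μ :=
      key _ (by fun_prop) fun ω h => hm _ (b1 ω h)
    refine ⟨?_, h1 ▸ integral_nonneg fun ω => le_max_right _ _,
      h3 ▸ integral_nonneg fun ω => le_max_right _ _,
      h2 ▸ integral_nonpos fun ω => min_le_right _ _,
      h4 ▸ integral_nonpos fun ω => min_le_right _ _⟩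
    have h0' : 0 ≤ ψ₀ := h0 ▸ integral_nonneg fun ω => by simp
    set a := ψxp - ψxm with ha
    set b := ψyp - ψym with hb
    have hsq := Real.sq_sqrt (show 0 ≤ a ^ 2 + b ^ 2 by positivity)
    have hR := Real.sqrt_nonneg (a ^ 2 + b ^ 2)
    generalize √(a ^ 2 + b ^ 2) = R at *
    have j1 : Integrable (fun ω : EuclideanSpace ℝ (Fin 3) =>
        a * (max (ω 0) 0 - min (ω 0) 0)) μ := (i1.sub i2).const_mul a
    have j2 : Integrable (fun ω : EuclideanSpace ℝ (Fin 3) =>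
        b * (max (ω 1) 0 - min (ω 1) 0)) μ := (i3.sub i4).const_mul b
    have hI : ∫ ω : EuclideanSpace ℝ (Fin 3),
        (a * (max (ω 0) 0 - min (ω 0) 0) + b * (max (ω 1) 0 - min (ω 1) 0)) ∂μ
          = a ^ 2 + b ^ 2 := by
      rw [integral_add j1 j2,
        integral_const_mul, integral_const_mul, integral_sub i1 i2, integral_sub i3 i4,
        h1, h2, h3, h4]
      ring
    have hle : ∫ ω : EuclideanSpace ℝ (Fin 3),
        (a * (max (ω 0) 0 - min (ω 0) 0) + b * (max (ω 1) 0 - min (ω 1) 0)) ∂μ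
          ≤ ∫ _ω, R * 1 ∂μ := by
      refine integral_mono_ae (j1.add j2)
        (integrable_const _) ?_
      filter_upwards [hn] with ω hω
      have e : ∀ x : ℝ, max x 0 - min x 0 = |x| := by
        intro x; rw [max_sub_min_eq_abs, zero_sub, abs_neg]
      simp only [e]
      rw [mul_one]
      refine abs_le_of_sq_le_sq' ?_ hR |>.2
      have e0 := sq_abs (ω 0)
      have e1 := sq_abs (ω 1)
      nlinarith [sq_nonneg (a * |ω 1| - b * |ω 0|), mul_nonneg (sq_nonneg R) (sub_nonneg.2 hω)]
    rw [hI, integral_const_mul, h0, ← hsq] at hle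
    by_contra hlt
    push Not at hlt
    nlinarith
  · rintro ⟨h0, h1, h3, h2, h4⟩
    obtain ⟨p, hp0, hp1, hp, hp'⟩ := mm_split _ _ h1 h2
    obtain ⟨q, hq0, hq1, hq, hq'⟩ := mm_split _ _ h3 h4
    obtain ⟨u, v, hu, hv, huv, hRu, hRv⟩ :=
      mm_polar (ψxp - ψxm) (ψyp - ψym) (by linarith) (by linarith)
    have hR := Real.sqrt_nonneg ((ψxp - ψxm) ^ 2 + (ψyp - ψym) ^ 2)
    generalize √((ψxp - ψxm) ^ 2 + (ψyp - ψym) ^ 2) = R at *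
    rw [← hRu] at hp hp'
    rw [← hRv] at hq hq'
    have hp1' := sub_nonneg.2 hp1
    have hq1' := sub_nonneg.2 hq1
    let c : Fin 5 → ℝ :=
      ![R * (p * q), R * (p * (1 - q)), R * ((1 - p) * q), R * ((1 - p) * (1 - q)), ψ₀ - R]
    let P : Fin 5 → EuclideanSpace ℝ (Fin 3) :=
      ![!₂[u, v, 0], !₂[u, -v, 0], !₂[-u, v, 0], !₂[-u, -v, 0], !₂[0, 0, 1]]
    have hc : ∀ k, 0 ≤ c k := by
      intro k
      fin_cases k
      · show 0 ≤ R * (p * q); positivity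
      · show 0 ≤ R * (p * (1 - q)); positivity
      · show 0 ≤ R * ((1 - p) * q); positivity
      · show 0 ≤ R * ((1 - p) * (1 - q)); positivity
      · show 0 ≤ ψ₀ - R; linarith
    have hP : ∀ k, P k ∈ Metric.sphere (0 : EuclideanSpace ℝ (Fin 3)) 1 := by
      intro k
      fin_cases k <;> simp [P, EuclideanSpace.norm_eq, Fin.sum_univ_three, huv]
    refine ⟨mmM c P, inferInstance, mmM_sphere c P hP, ?_, ?_, ?_, ?_, ?_⟩
    · rw [mm_mass _ (mmM_sphere c P hP), mmM_int c hc]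
      simp [Fin.sum_univ_five, c]; ring
    · rw [mm_pos, mmM_int c hc]
      simp [Fin.sum_univ_five, c, P, hu]; linear_combination hp
    · rw [mm_neg, mmM_int c hc]
      simp [Fin.sum_univ_five, c, P, hu]; linear_combination -hp'
    · rw [mm_pos, mmM_int c hc]
      simp [Fin.sum_univ_five, c, P, hv]; linear_combination hq
    · rw [mm_neg, mmM_int c hc]
      simp [Fin.sum_univ_five, c, P, hv]; linear_combination -hq'
end
end

section
/- Let μ be a finite nonnegative Borel measure on S² supported in the quarter-sphere S₊₊ with μ(S²) = 1, and suppose the first moment φ := ∫_{S²} Ω dμ satisfies ‖φ‖₂ = 1. Then the second moment equals the rank-one matrix ∫_{S²} Ω Ωᵀ dμ = φ φᵀ; in particular φ is an eigenvector of the second moment with eigenvalue λ = 1 = ‖φ‖₂ = ‖φ‖₂². -/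
open MeasureTheory Real

noncomputable section

/-- Case (d) of the structure lemma for quarter moments: if a probability measure `μ` supported in
the quarter-sphere `S₊₊` has first moment `φ` of Euclidean norm `1`, then its second moment is the
rank-one matrix `φ φᵀ`; in particular `φ` is an eigenvector with eigenvalue `1 = ‖φ‖₂ = ‖φ‖₂²`. -/
theorem quarter_moment_eigenvector_boundary
    (μ : Measure (EuclideanSpace ℝ (Fin 3))) [IsFiniteMeasure μ]
    (hsupp : μ {ω | ¬ (‖ω‖ = 1 ∧ 0 ≤ ω 0 ∧ 0 ≤ ω 1)} = 0)
    (hmass : μ Set.univ = 1)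
    (hnorm : Real.sqrt ((∫ ω, ω 0 ∂μ) ^ 2 + (∫ ω, ω 1 ∂μ) ^ 2) = 1) :
    (!![∫ ω, ω 0 * ω 0 ∂μ, ∫ ω, ω 0 * ω 1 ∂μ;
        ∫ ω, ω 1 * ω 0 ∂μ, ∫ ω, ω 1 * ω 1 ∂μ] =
      Matrix.vecMulVec ![∫ ω, ω 0 ∂μ, ∫ ω, ω 1 ∂μ] ![∫ ω, ω 0 ∂μ, ∫ ω, ω 1 ∂μ]) ∧
    ((!![∫ ω, ω 0 * ω 0 ∂μ, ∫ ω, ω 0 * ω 1 ∂μ;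
         ∫ ω, ω 1 * ω 0 ∂μ, ∫ ω, ω 1 * ω 1 ∂μ]).mulVec ![∫ ω, ω 0 ∂μ, ∫ ω, ω 1 ∂μ] =
      (1 : ℝ) • ![∫ ω, ω 0 ∂μ, ∫ ω, ω 1 ∂μ]) := by
  have : IsProbabilityMeasure μ := ⟨hmass⟩
  have hae : ∀ᵐ ω ∂μ, ‖ω‖ = 1 ∧ 0 ≤ ω 0 ∧ 0 ≤ ω 1 := by
    rw [ae_iff]; exact hsupp
  have hsq : ∀ᵐ ω ∂μ, ω 0 ^ 2 + ω 1 ^ 2 ≤ 1 := by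
    filter_upwards [hae] with ω hω
    have h := EuclideanSpace.real_norm_sq_eq ω
    rw [hω.1, Fin.sum_univ_three] at h
    nlinarith [sq_nonneg (ω 2)]
  have hx : Integrable (fun ω : EuclideanSpace ℝ (Fin 3) => ω 0) μ := by
    refine Integrable.of_bound (C := 1) (by fun_prop) ?_
    filter_upwards [hsq] with ω hω
    rw [Real.norm_eq_abs, abs_le]
    constructor <;> nlinarith [sq_nonneg (ω 1)]
  have hy : Integrable (fun ω : EuclideanSpace ℝ (Fin 3) => ω 1) μ := by
    refine Integrable.of_bound (C := 1) (by fun_prop) ?_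
    filter_upwards [hsq] with ω hω
    rw [Real.norm_eq_abs, abs_le]
    constructor <;> nlinarith [sq_nonneg (ω 0)]
  obtain ⟨a, ha⟩ : ∃ a, a = ∫ ω, ω 0 ∂μ := ⟨_, rfl⟩
  obtain ⟨b, hb⟩ : ∃ b, b = ∫ ω, ω 1 ∂μ := ⟨_, rfl⟩
  rw [← ha, ← hb] at hnorm ⊢
  have hab : a ^ 2 + b ^ 2 = 1 := by
    rwa [Real.sqrt_eq_one] at hnorm
  have hint : Integrable (fun ω : EuclideanSpace ℝ (Fin 3) => 1 - (a * ω 0 + b * ω 1)) μ :=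
    (integrable_const 1).sub ((hx.const_mul a).add (hy.const_mul b))
  have h0 : ∫ ω : EuclideanSpace ℝ (Fin 3), (1 - (a * ω 0 + b * ω 1)) ∂μ = 0 := by
    have hs : Integrable (fun ω : EuclideanSpace ℝ (Fin 3) => a * ω 0 + b * ω 1) μ :=
      (hx.const_mul a).add (hy.const_mul b)
    rw [integral_sub (integrable_const 1) hs,
      integral_add (hx.const_mul a) (hy.const_mul b), integral_const_mul, integral_const_mul,
      ← ha, ← hb]
    simp
    linarith
  have hnn : 0 ≤ᵐ[μ] (fun ω : EuclideanSpace ℝ (Fin 3) => 1 - (a * ω 0 + b * ω 1)) := by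
    filter_upwards [hsq] with ω hω
    simp only [Pi.zero_apply]
    nlinarith [sq_nonneg (ω 0 - a), sq_nonneg (ω 1 - b)]
  have hz := (integral_eq_zero_iff_of_nonneg_ae hnn hint).1 h0
  have hEq : ∀ᵐ ω ∂μ, ω 0 = a ∧ ω 1 = b := by
    filter_upwards [hsq, hz] with ω hω hω2
    simp only [Pi.zero_apply] at hω2
    have h1 : (ω 0 - a) ^ 2 ≤ 0 := by nlinarith [sq_nonneg (ω 1 - b)]
    have h2 : (ω 1 - b) ^ 2 ≤ 0 := by nlinarith [sq_nonneg (ω 0 - a)]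
    constructor
    · linarith [pow_eq_zero_iff (two_ne_zero) |>.1 (le_antisymm h1 (sq_nonneg _))]
    · linarith [pow_eq_zero_iff (two_ne_zero) |>.1 (le_antisymm h2 (sq_nonneg _))]
  have key : ∀ (f : EuclideanSpace ℝ (Fin 3) → ℝ) (c : ℝ),
      (∀ ω : EuclideanSpace ℝ (Fin 3), ω 0 = a ∧ ω 1 = b → f ω = c) → ∫ ω, f ω ∂μ = c := by
    intro f c h
    rw [integral_congr_ae (hEq.mono h)]
    simp
  rw [key (fun ω => ω 0 * ω 0) (a * a) (fun ω h => by simp only [h.1]),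
    key (fun ω => ω 0 * ω 1) (a * b) (fun ω h => by simp only [h.1, h.2]),
    key (fun ω => ω 1 * ω 0) (b * a) (fun ω h => by simp only [h.1, h.2]),
    key (fun ω => ω 1 * ω 1) (b * b) (fun ω h => by simp only [h.2])]
  constructor
  · ext i j
    fin_cases i <;> fin_cases j <;> simp [Matrix.vecMulVec_apply]
  · ext i
    fin_cases i
    · simp [Matrix.mulVec, dotProduct, Fin.sum_univ_two]
      linear_combination a * hab
    · simp [Matrix.mulVec, dotProduct, Fin.sum_univ_two]
      linear_combination b * hab
end
end

section
/- Let μ be a finite nonnegative Borel measure on S² supported in the quarter-sphere S₊₊ with μ(S²) = 1, let φ := ∫_{S²} Ω dμ be its first moment and M := ∫_{S²} Ω Ωᵀ dμ its second moment. Assume φ ≠ 0 and that φ/‖φ‖₂ is an eigenvector of M with eigenvalue λ. Then ‖φ‖₂² ≤ λ ≤ ‖φ‖₂. -/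
open MeasureTheory Real

noncomputable section

/-- Eigenvalue bounds for the quarter-moment second moment: if the first moment `φ` of a
probability measure supported in `S₊₊` is nonzero and is an eigenvector of the second moment
matrix with eigenvalue `l`, then `‖φ‖₂² ≤ l ≤ ‖φ‖₂`. -/
theorem quarter_moment_eigenvalue_bounds
    (μ : Measure (EuclideanSpace ℝ (Fin 3))) [IsFiniteMeasure μ]
    (hsupp : μ {ω | ¬ (‖ω‖ = 1 ∧ 0 ≤ ω 0 ∧ 0 ≤ ω 1)} = 0)
    (hmass : μ Set.univ = 1)
    (hφ : ![∫ ω, ω 0 ∂μ, ∫ ω, ω 1 ∂μ] ≠ 0)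
    (l : ℝ)
    (heig : (!![∫ ω, ω 0 * ω 0 ∂μ, ∫ ω, ω 0 * ω 1 ∂μ;
                ∫ ω, ω 1 * ω 0 ∂μ, ∫ ω, ω 1 * ω 1 ∂μ]).mulVec
          ![∫ ω, ω 0 ∂μ, ∫ ω, ω 1 ∂μ] = l • ![∫ ω, ω 0 ∂μ, ∫ ω, ω 1 ∂μ]) :
    (∫ ω, ω 0 ∂μ) ^ 2 + (∫ ω, ω 1 ∂μ) ^ 2 ≤ l ∧
      l ≤ Real.sqrt ((∫ ω, ω 0 ∂μ) ^ 2 + (∫ ω, ω 1 ∂μ) ^ 2) := by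
  have hP : IsProbabilityMeasure μ := ⟨hmass⟩
  have hae : ∀ᵐ ω ∂μ, ‖ω‖ = 1 ∧ 0 ≤ ω 0 ∧ 0 ≤ ω 1 := hsupp
  have hb : ∀ (ω : EuclideanSpace ℝ (Fin 3)), ‖ω‖ = 1 → ω 0 ^ 2 + ω 1 ^ 2 ≤ 1 := by
    intro ω h
    have h2 := EuclideanSpace.norm_sq_eq ω
    rw [h, Fin.sum_univ_three] at h2
    simp only [Real.norm_eq_abs, sq_abs] at h2
    nlinarith [sq_nonneg (ω 2)]
  have hint : ∀ f : EuclideanSpace ℝ (Fin 3) → ℝ, Continuous f →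
      (∀ ω : EuclideanSpace ℝ (Fin 3), ω 0 ^ 2 + ω 1 ^ 2 ≤ 1 → |f ω| ≤ 1) → Integrable f μ := by
    intro f hf h
    refine Integrable.of_bound hf.aestronglyMeasurable 1 ?_
    filter_upwards [hae] with ω hω
    exact h ω (hb ω hω.1)
  have i0 : Integrable (fun ω : EuclideanSpace ℝ (Fin 3) => ω 0) μ :=
    hint _ (by fun_prop) (fun ω h => abs_le.2 ⟨by nlinarith [sq_nonneg (ω 1)], by nlinarith [sq_nonneg (ω 1)]⟩)
  have i1 : Integrable (fun ω : EuclideanSpace ℝ (Fin 3) => ω 1) μ :=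
    hint _ (by fun_prop) (fun ω h => abs_le.2 ⟨by nlinarith [sq_nonneg (ω 0)], by nlinarith [sq_nonneg (ω 0)]⟩)
  have i00 : Integrable (fun ω : EuclideanSpace ℝ (Fin 3) => ω 0 * ω 0) μ :=
    hint _ (by fun_prop) (fun ω h => abs_le.2 ⟨by nlinarith [sq_nonneg (ω 1)], by nlinarith [sq_nonneg (ω 1)]⟩)
  have i11 : Integrable (fun ω : EuclideanSpace ℝ (Fin 3) => ω 1 * ω 1) μ :=
    hint _ (by fun_prop) (fun ω h => abs_le.2 ⟨by nlinarith [sq_nonneg (ω 0)], by nlinarith [sq_nonneg (ω 0)]⟩)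
  have i01 : Integrable (fun ω : EuclideanSpace ℝ (Fin 3) => ω 0 * ω 1) μ :=
    hint _ (by fun_prop) (fun ω h => abs_le.2 ⟨by nlinarith [sq_nonneg (ω 0 + ω 1)], by nlinarith [sq_nonneg (ω 0 - ω 1)]⟩)
  have hexp : ∀ p q t u v w : ℝ,
      ∫ ω, (p * (ω 0 * ω 0) + q * (ω 0 * ω 1) + t * (ω 1 * ω 1) + u * ω 0 + v * ω 1 + w) ∂μ
      = p * ∫ ω, ω 0 * ω 0 ∂μ + q * ∫ ω, ω 0 * ω 1 ∂μ + t * ∫ ω, ω 1 * ω 1 ∂μ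
        + u * ∫ ω, ω 0 ∂μ + v * ∫ ω, ω 1 ∂μ + w := by
    intro p q t u v w
    have j00 := i00.const_mul p
    have j01 := i01.const_mul q
    have j11 := i11.const_mul t
    have j0 := i0.const_mul u
    have j1 := i1.const_mul v
    have k1 := j00.fun_add j01
    have k2 := k1.fun_add j11
    have k3 := k2.fun_add j0
    have k4 := k3.fun_add j1
    rw [← integral_const_mul, ← integral_const_mul, ← integral_const_mul, ← integral_const_mul,
      ← integral_const_mul, ← integral_add j00 j01, ← integral_add k1 j11, ← integral_add k2 j0,
      ← integral_add k3 j1]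
    have := integral_add k4 (integrable_const (μ := μ) w)
    simpa using this
  have hc : ∫ ω, ω 1 * ω 0 ∂μ = ∫ ω, ω 0 * ω 1 ∂μ := by simp only [mul_comm]
  rw [hc] at heig
  have a0 : 0 ≤ ∫ ω, ω 0 ∂μ := integral_nonneg_of_ae (hae.mono fun ω h => h.2.1)
  have b0 : 0 ≤ ∫ ω, ω 1 ∂μ := integral_nonneg_of_ae (hae.mono fun ω h => h.2.2)
  generalize (∫ ω, ω 0 ∂μ) = a at *
  generalize (∫ ω, ω 1 ∂μ) = b at *
  generalize (∫ ω, ω 0 * ω 0 ∂μ) = A at *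
  generalize (∫ ω, ω 0 * ω 1 ∂μ) = B at *
  generalize (∫ ω, ω 1 * ω 1 ∂μ) = C at *
  have e0 := congrFun heig 0
  have e1 := congrFun heig 1
  simp [Matrix.mulVec, dotProduct, Fin.sum_univ_two] at e0 e1
  have hs : 0 < a ^ 2 + b ^ 2 := by
    by_contra hn
    apply hφ
    have ha : a = 0 := by nlinarith [sq_nonneg a, sq_nonneg b]
    have hb' : b = 0 := by nlinarith [sq_nonneg a, sq_nonneg b]
    simp [ha, hb']
  have hq : a ^ 2 * A + 2 * a * b * B + b ^ 2 * C = l * (a ^ 2 + b ^ 2) := by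
    linear_combination a * e0 + b * e1
  obtain ⟨s, hsd⟩ : ∃ s, s = a ^ 2 + b ^ 2 := ⟨_, rfl⟩
  obtain ⟨r, hr⟩ : ∃ r, r = √s := ⟨_, rfl⟩
  have hr0 : 0 ≤ r := hr ▸ Real.sqrt_nonneg _
  rw [← hsd] at hs hq ⊢
  have hrs : r ^ 2 = s := hr ▸ Real.sq_sqrt hs.le
  rw [← hr]
  constructor
  · have h1 := hexp (a ^ 2) (2 * a * b) (b ^ 2) (-2 * s * a) (-2 * s * b) (s ^ 2)
    have h2 : 0 ≤ a ^ 2 * A + 2 * a * b * B + b ^ 2 * C + -2 * s * a * a + -2 * s * b * b + s ^ 2 := by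
      rw [← h1]
      refine integral_nonneg fun ω => ?_
      have : 0 ≤ (a * ω 0 + b * ω 1 - s) ^ 2 := sq_nonneg _
      simp only [Pi.zero_apply]
      linarith
    have h3 : 0 ≤ (l - s) * s := by
      have : a * a + b * b = s := by rw [hsd]; ring
      have : -2 * s * a * a + -2 * s * b * b = -2 * s * s := by rw [← this]; ring
      linarith
    linarith [nonneg_of_mul_nonneg_left h3 hs]
  · have h1 := hexp (-a ^ 2) (-2 * a * b) (-b ^ 2) (r * a) (r * b) 0
    have h2 : 0 ≤ -a ^ 2 * A + -2 * a * b * B + -b ^ 2 * C + r * a * a + r * b * b + 0 := by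
      rw [← h1]
      refine integral_nonneg_of_ae ?_
      filter_upwards [hae] with ω hω
      have hw := hb ω hω.1
      have hX : 0 ≤ a * ω 0 + b * ω 1 := by
        have := mul_nonneg a0 hω.2.1
        have := mul_nonneg b0 hω.2.2
        linarith
      have hX2 : a * ω 0 + b * ω 1 ≤ r := by
        apply abs_le_of_sq_le_sq' _ hr0 |>.2
        rw [hrs]
        have h5 : (a * ω 0 + b * ω 1) ^ 2 ≤ s * (ω 0 ^ 2 + ω 1 ^ 2) := by
          rw [hsd]; nlinarith [sq_nonneg (a * ω 1 - b * ω 0)]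
        nlinarith
      have := mul_nonneg hX (sub_nonneg.2 hX2)
      simp only [Pi.zero_apply]
      linarith
    have h3 : 0 ≤ (r - l) * s := by
      have : r * a * a + r * b * b = r * s := by rw [hsd]; ring
      linarith
    linarith [nonneg_of_mul_nonneg_left h3 hs]
end
end

section
/- Let φ = (φ₁, φ₂) ∈ ℝ² with φ₁, φ₂ ≥ 0 and 0 < ‖φ‖₂ ≤ 1, write r := ‖φ‖₂. Define χ₀ := −(2π − 3√2·π + 4)/(3π(√2 − 1)), χ := 1 − √2(1 − χ₀)·r, λ := χ·r² + (1 − χ)·r, α₁ := φ₁φ₂·(8/3 − 16/(3π))·(1 − r²), α₂ := λ − α₁, and the 2×2 matrix M := α₁·I + α₂·(φφᵀ)/r². Then there exists a finite nonnegative Borel measure μ on S², supported in the quarter-sphere S₊₊, with μ(S²) = 1, ∫_{S²} Ω dμ = φ and ∫_{S²} Ω Ωᵀ dμ = M. (Realizability of the first-order quarter-moment Kershaw closure QK₁.) -/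
open MeasureTheory Real

noncomputable section

lemma qk_atoms (p₁ p₂ p₃ x₁ x₂ x₃ y₁ y₂ y₃ : ℝ) (hp₁ : 0 ≤ p₁) (hp₂ : 0 ≤ p₂) (hp₃ : 0 ≤ p₃)
    (hp : p₁ + p₂ + p₃ = 1) (hx₁ : 0 ≤ x₁) (hx₂ : 0 ≤ x₂) (hx₃ : 0 ≤ x₃)
    (hy₁ : 0 ≤ y₁) (hy₂ : 0 ≤ y₂) (hy₃ : 0 ≤ y₃)
    (h₁ : x₁ ^ 2 + y₁ ^ 2 ≤ 1) (h₂ : x₂ ^ 2 + y₂ ^ 2 ≤ 1) (h₃ : x₃ ^ 2 + y₃ ^ 2 ≤ 1) :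
    ∃ μ : Measure (EuclideanSpace ℝ (Fin 3)), IsFiniteMeasure μ ∧
      μ {ω | ¬ (‖ω‖ = 1 ∧ 0 ≤ ω 0 ∧ 0 ≤ ω 1)} = 0 ∧
      μ Set.univ = 1 ∧
      (∀ f : EuclideanSpace ℝ (Fin 3) → ℝ, ∀ g : ℝ → ℝ → ℝ, (∀ ω, f ω = g (ω 0) (ω 1)) →
        ∫ ω, f ω ∂μ = p₁ * g x₁ y₁ + p₂ * g x₂ y₂ + p₃ * g x₃ y₃) := by
  let P : ℝ → ℝ → EuclideanSpace ℝ (Fin 3) := fun x y => !₂[x, y, Real.sqrt (1 - x ^ 2 - y ^ 2)]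
  have hP : ∀ x y : ℝ, 0 ≤ x → 0 ≤ y → x ^ 2 + y ^ 2 ≤ 1 →
      (Measure.dirac (P x y)) {ω | ¬ (‖ω‖ = 1 ∧ 0 ≤ ω 0 ∧ 0 ≤ ω 1)} = 0 := by
    intro x y hx hy h
    rw [Measure.dirac_apply]
    refine Set.indicator_of_notMem ?_ _
    simp only [Set.mem_setOf_eq, not_not]
    refine ⟨?_, ?_, ?_⟩
    · rw [EuclideanSpace.norm_eq, Real.sqrt_eq_one, Fin.sum_univ_three]
      simp only [P, Real.norm_eq_abs, sq_abs]
      simp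
      rw [Real.sq_sqrt (by linarith)]
      ring
    · simpa [P] using hx
    · simpa [P] using hy
  have hi : ∀ (f : EuclideanSpace ℝ (Fin 3) → ℝ) (p x y : ℝ),
      Integrable f (ENNReal.ofReal p • Measure.dirac (P x y)) := by
    intro f p x y
    exact (integrable_dirac (by simp)).smul_measure ENNReal.ofReal_ne_top
  refine ⟨ENNReal.ofReal p₁ • Measure.dirac (P x₁ y₁) + ENNReal.ofReal p₂ • Measure.dirac (P x₂ y₂)
    + ENNReal.ofReal p₃ • Measure.dirac (P x₃ y₃), ?_, ?_, ?_, ?_⟩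
  · refine ⟨?_⟩
    simp
  · simp only [Measure.add_apply, Measure.smul_apply, hP x₁ y₁ hx₁ hy₁ h₁, hP x₂ y₂ hx₂ hy₂ h₂,
      hP x₃ y₃ hx₃ hy₃ h₃]
    simp
  · simp only [Measure.add_apply, Measure.smul_apply, measure_univ, smul_eq_mul, mul_one]
    rw [← ENNReal.ofReal_add hp₁ hp₂, ← ENNReal.ofReal_add (by positivity) hp₃, hp]
    simp
  · intro f g hfg
    rw [integral_add_measure ((hi f _ _ _).add_measure (hi f _ _ _)) (hi f _ _ _),
      integral_add_measure (hi f _ _ _) (hi f _ _ _)]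
    simp only [integral_smul_measure, integral_dirac, ENNReal.toReal_ofReal, hp₁, hp₂, hp₃,
      smul_eq_mul, hfg]
    simp [P]

lemma qk_prod (A B V : ℝ) (hA : 0 ≤ A) (hV : 0 < V) (h : V ≤ A * B) :
    ∃ v₁ v₂ : ℝ, 0 < v₁ ∧ 0 < v₂ ∧ v₁ ≤ A ∧ v₂ ≤ B ∧ v₁ * v₂ = V := by
  have hA' : 0 < A := by
    rcases hA.eq_or_lt with h0 | h0
    · rw [← h0] at h; linarith
    · exact h0
  exact ⟨A, V / A, hA', by positivity, le_rfl, by rw [div_le_iff₀ hA']; linarith,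
    by field_simp⟩

set_option maxHeartbeats 1000000 in
/-- choice of chord: weights `q, 1-q`, offsets `v₁, -v₂`. -/
lemma qk_chord (C S r b c k : ℝ) (hC : 0 ≤ C) (hS : 0 ≤ S) (hCS : C ^ 2 + S ^ 2 = 1)
    (hr0 : 0 < r) (hr1 : r ≤ 1) (hc0 : 0 ≤ c) (hc1 : c ≤ 1 / 3) (hk0 : 0 < k) (hk1 : k ≤ 1)
    (hb : b = r * (1 + c * (1 - r))) :
    ∃ q v₁ v₂ : ℝ, 0 ≤ q ∧ q ≤ 1 ∧ 0 ≤ v₁ ∧ 0 ≤ v₂ ∧ v₁ * S ≤ b * C ∧ v₂ * C ≤ b * S ∧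
      b ^ 2 + v₁ ^ 2 ≤ 1 ∧ b ^ 2 + v₂ ^ 2 ≤ 1 ∧ q * v₁ = (1 - q) * v₂ ∧
      q * v₁ ^ 2 + (1 - q) * v₂ ^ 2 = k * (S * C) * r * b * (1 - r ^ 2) := by
  have hrb : r ≤ b := by rw [hb]; nlinarith [mul_nonneg hr0.le (mul_nonneg hc0 (sub_nonneg.2 hr1))]
  have hb0 : 0 < b := hr0.trans_le hrb
  have h1b : 1 - b = (1 - r) * (1 - c * r) := by rw [hb]; ring
  have hcr : 2 / 3 ≤ 1 - c * r := by nlinarith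
  have hb1 : b ≤ 1 := by nlinarith [mul_nonneg (sub_nonneg.2 hr1) (by linarith : 0 ≤ 1 - c * r)]
  have hw : 2 / 3 * (1 - r ^ 2) ≤ 1 - b ^ 2 := by
    have h1 : 2 / 3 * (1 - r) ≤ 1 - b := by rw [h1b]; nlinarith
    nlinarith
  have hr2 : 0 ≤ 1 - r ^ 2 := by nlinarith
  have hSC : S * C ≤ 1 / 2 := by nlinarith [sq_nonneg (S - C)]
  have hb2 : b ^ 2 ≤ 1 := by nlinarith
  have hV0 : 0 ≤ k * (S * C) * r * b * (1 - r ^ 2) := by positivity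
  rcases hV0.eq_or_lt with h0 | h0
  · exact ⟨0, 0, 0, by simp, by simp, by simp, by simp, by simpa using mul_nonneg hb0.le hC,
      by simpa using mul_nonneg hb0.le hS, by simpa using hb2, by simpa using hb2, by simp,
      by rw [← h0]; simp⟩
  have hS0 : 0 < S := by
    rcases hS.eq_or_lt with h | h
    · rw [← h] at h0; simp at h0
    · exact h
  have hC0 : 0 < C := by
    rcases hC.eq_or_lt with h | h
    · rw [← h] at h0; simp at h0
    · exact h
  obtain ⟨w, hw0, hww⟩ : ∃ w : ℝ, 0 ≤ w ∧ w ^ 2 = 1 - b ^ 2 :=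
    ⟨Real.sqrt (1 - b ^ 2), Real.sqrt_nonneg _, Real.sq_sqrt (by linarith)⟩
  have hrw : r * (1 - r ^ 2) ≤ w := by
    apply le_of_sq_le_sq _ hw0
    rw [hww]
    have : r ^ 2 * (1 - r ^ 2) ≤ 2 / 3 := by nlinarith [sq_nonneg (r ^ 2 - 1 / 2)]
    nlinarith [mul_le_mul_of_nonneg_right this hr2]
  have hS1 : S ^ 2 ≤ 1 := by nlinarith
  have hC1 : C ^ 2 ≤ 1 := by nlinarith
  have hrr : 0 ≤ r * (1 - r ^ 2) := by positivity
  have e1 : k * (S * C) * r * b * (1 - r ^ 2) ≤ b * C / S * (b * S / C) := by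
    have : b * C / S * (b * S / C) = b * b := by field_simp
    rw [this]
    have h1 : k * (S * C) ≤ 1 := by nlinarith [mul_pos hS0 hC0]
    have h2 : k * (S * C) * (r * (1 - r ^ 2)) ≤ 1 * (r * (1 - r ^ 2)) :=
      mul_le_mul_of_nonneg_right h1 hrr
    have h3 : r * (1 - r ^ 2) ≤ b := by nlinarith [mul_nonneg hr0.le (sq_nonneg r)]
    have h4 : k * (S * C) * (r * (1 - r ^ 2)) ≤ b := by linarith
    have h5 := mul_le_mul_of_nonneg_right h4 hb0.le
    linarith
  have aux : ∀ T : ℝ, T ^ 2 ≤ 1 → k * T ^ 2 * (r * (1 - r ^ 2)) ≤ w := by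
    intro T hT
    have h1 : k * T ^ 2 ≤ 1 := by nlinarith [sq_nonneg T]
    have h2 := mul_le_mul_of_nonneg_right h1 hrr
    linarith
  have e2 : k * (S * C) * r * b * (1 - r ^ 2) ≤ b * C / S * w := by
    have h := mul_le_mul_of_nonneg_left (aux S hS1) (by positivity : 0 ≤ b * C / S)
    have : b * C / S * (k * S ^ 2 * (r * (1 - r ^ 2))) = k * (S * C) * r * b * (1 - r ^ 2) := by
      field_simp
    linarith
  have e3 : k * (S * C) * r * b * (1 - r ^ 2) ≤ w * (b * S / C) := by
    have h := mul_le_mul_of_nonneg_left (aux C hC1) (by positivity : 0 ≤ b * S / C)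
    have : b * S / C * (k * C ^ 2 * (r * (1 - r ^ 2))) = k * (S * C) * r * b * (1 - r ^ 2) := by
      field_simp
    linarith
  have e4 : k * (S * C) * r * b * (1 - r ^ 2) ≤ w * w := by
    have h1 : k * (S * C) ≤ 1 / 2 := by nlinarith [mul_pos hS0 hC0]
    have h2 : r * b ≤ 1 := mul_le_one₀ hr1 hb0.le hb1
    have h3 : k * (S * C) * (r * b) ≤ 1 / 2 := by
      have : 0 ≤ r * b := by positivity
      have h6 := mul_le_mul_of_nonneg_right h1 this
      linarith
    have h4 := mul_le_mul_of_nonneg_right h3 hr2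
    have h7 : w * w = 1 - b ^ 2 := by rw [← hww]; ring
    linarith
  obtain ⟨v₁, v₂, p1, p2, l1, l2, hv⟩ := qk_prod (min (b * C / S) w) (min (b * S / C) w) _
    (le_min (by positivity) hw0) h0 (by
      rcases min_choice (b * C / S) w with h | h <;> rcases min_choice (b * S / C) w with h' | h' <;>
        rw [h, h'] <;> assumption)
  have l11 := (le_div_iff₀ hS0).1 (l1.trans (min_le_left _ _))
  have l12 := l1.trans (min_le_right _ _)
  have l21 := (le_div_iff₀ hC0).1 (l2.trans (min_le_left _ _))
  have l22 := l2.trans (min_le_right _ _)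
  refine ⟨v₂ / (v₁ + v₂), v₁, v₂, by positivity, ?_, p1.le, p2.le, l11, l21, by linarith [pow_le_pow_left₀ p1.le l12 2],
    by linarith [pow_le_pow_left₀ p2.le l22 2], ?_, ?_⟩
  · rw [div_le_one (by positivity)]; linarith
  · field_simp; ring
  · rw [← hv]; field_simp; ring

/-- Realizability of the first-order quarter-moment Kershaw closure `QK₁`: for every normalized
first moment `φ = (φ₁, φ₂)` in the quarter disk (with `0 < r = ‖φ‖₂ ≤ 1`) there is a probability
measure supported in the quarter-sphere `S₊₊` with first moment `φ` and second moment
`α₁ I + (α₂/r²) φ φᵀ` given by the Kershaw coefficients. -/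
theorem QK1_closure_realizable
    (φ₁ φ₂ r χ₀ χ lam α₁ α₂ : ℝ)
    (hφ₁ : 0 ≤ φ₁) (hφ₂ : 0 ≤ φ₂)
    (hr : r = Real.sqrt (φ₁ ^ 2 + φ₂ ^ 2)) (hr0 : 0 < r) (hr1 : r ≤ 1)
    (hχ₀ : χ₀ = -(2 * π - 3 * Real.sqrt 2 * π + 4) / (3 * π * (Real.sqrt 2 - 1)))
    (hχ : χ = 1 - Real.sqrt 2 * (1 - χ₀) * r)
    (hlam : lam = χ * r ^ 2 + (1 - χ) * r)
    (hα₁ : α₁ = φ₁ * φ₂ * (8 / 3 - 16 / (3 * π)) * (1 - r ^ 2))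
    (hα₂ : α₂ = lam - α₁) :
    ∃ μ : Measure (EuclideanSpace ℝ (Fin 3)), IsFiniteMeasure μ ∧
      μ {ω | ¬ (‖ω‖ = 1 ∧ 0 ≤ ω 0 ∧ 0 ≤ ω 1)} = 0 ∧
      μ Set.univ = 1 ∧
      (∫ ω, ω 0 ∂μ) = φ₁ ∧ (∫ ω, ω 1 ∂μ) = φ₂ ∧
      !![∫ ω, ω 0 * ω 0 ∂μ, ∫ ω, ω 0 * ω 1 ∂μ;
         ∫ ω, ω 1 * ω 0 ∂μ, ∫ ω, ω 1 * ω 1 ∂μ] =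
        α₁ • (1 : Matrix (Fin 2) (Fin 2) ℝ) +
          (α₂ / r ^ 2) • Matrix.vecMulVec ![φ₁, φ₂] ![φ₁, φ₂] := by
  have hπ1 := Real.pi_gt_d4
  have hπ2 := Real.pi_lt_d4
  have hπ0 := Real.pi_pos
  have hs2 : Real.sqrt 2 ^ 2 = 2 := Real.sq_sqrt (by norm_num)
  have hs1 : 1.4142 < Real.sqrt 2 := Real.lt_sqrt_of_sq_lt (by norm_num)
  have hs3 : Real.sqrt 2 < 1.4143 := by
    rw [Real.sqrt_lt' (by norm_num)]; norm_num
  have hs4 : Real.sqrt 2 - 1 ≠ 0 := by intro h; linarith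
  obtain ⟨c, hc⟩ : ∃ c, c = (2 + Real.sqrt 2) * (4 - π) / (3 * π) := ⟨_, rfl⟩
  have hcχ : Real.sqrt 2 * (1 - χ₀) = c := by
    rw [hχ₀, hc]
    field_simp
    ring_nf
    simp only [show Real.sqrt 2 ^ 3 = Real.sqrt 2 ^ 2 * Real.sqrt 2 by ring, hs2]
    ring
  have hc0 : 0 ≤ c := by
    rw [hc]; exact div_nonneg (mul_nonneg (by linarith) (by linarith)) (by linarith)
  have hc1 : c ≤ 1 / 3 := by
    rw [hc, div_le_iff₀ (by linarith)]
    nlinarith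
  obtain ⟨k, hk⟩ : ∃ k, k = 8 / 3 - 16 / (3 * π) := ⟨_, rfl⟩
  have hk' : k * (3 * π) = 8 * π - 16 := by rw [hk]; field_simp
  have hk0 : 0 < k := by
    by_contra h
    nlinarith
  have hk1 : k ≤ 1 := by
    by_contra h
    nlinarith
  have hrsq : r ^ 2 = φ₁ ^ 2 + φ₂ ^ 2 := by rw [hr]; exact Real.sq_sqrt (by positivity)
  obtain ⟨C, hC⟩ : ∃ C, C = φ₁ / r := ⟨_, rfl⟩
  obtain ⟨S, hS⟩ : ∃ S, S = φ₂ / r := ⟨_, rfl⟩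
  have hCφ : φ₁ = r * C := by rw [hC]; field_simp
  have hSφ : φ₂ = r * S := by rw [hS]; field_simp
  have hC0 : 0 ≤ C := by rw [hC]; positivity
  have hS0 : 0 ≤ S := by rw [hS]; positivity
  have hCS : C ^ 2 + S ^ 2 = 1 := by rw [hC, hS]; field_simp; linarith
  obtain ⟨b, hb⟩ : ∃ b, b = r * (1 + c * (1 - r)) := ⟨_, rfl⟩
  have hrb : r ≤ b := by rw [hb]; nlinarith [mul_nonneg hr0.le (mul_nonneg hc0 (sub_nonneg.2 hr1))]
  have hb0 : 0 < b := hr0.trans_le hrb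
  obtain ⟨q, v₁, v₂, hq0, hq1, hv1, hv2, l1, l2, d1, d2, m1, m2⟩ :=
    qk_chord C S r b c k hC0 hS0 hCS hr0 hr1 hc0 hc1 hk0 hk1 hb
  obtain ⟨t, ht⟩ : ∃ t, t = r / b := ⟨_, rfl⟩
  have ht0 : 0 ≤ t := by rw [ht]; positivity
  have ht1 : t ≤ 1 := by rw [ht, div_le_one hb0]; exact hrb
  have htb : t * b = r := by rw [ht]; field_simp
  have hlam' : lam = r * b := by
    rw [hlam, hχ, hcχ, hb]; ring
  have hα₁' : α₁ = k * (S * C) * r ^ 2 * (1 - r ^ 2) := by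
    rw [hα₁, ← hk, hCφ, hSφ]; ring
  have hm2 : t * (q * v₁ ^ 2 + (1 - q) * v₂ ^ 2) = α₁ := by
    rw [m2, hα₁']
    linear_combination (k * (S * C) * r * (1 - r ^ 2)) * htb
  have hm0 : t * b ^ 2 = lam := by rw [hlam']; linear_combination b * htb
  obtain ⟨μ, f1, f2, f3, f4⟩ := qk_atoms (1 - t) (t * q) (t * (1 - q))
    0 (b * C - v₁ * S) (b * C + v₂ * S) 0 (b * S + v₁ * C) (b * S - v₂ * C)
    (by linarith) (by positivity) (mul_nonneg ht0 (by linarith)) (by ring) le_rfl (by linarith)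
    (by positivity) le_rfl (by positivity) (by linarith) (by norm_num)
    (by
      have : (b * C - v₁ * S) ^ 2 + (b * S + v₁ * C) ^ 2 = (b ^ 2 + v₁ ^ 2) * (C ^ 2 + S ^ 2) := by
        ring
      rw [this, hCS]; linarith)
    (by
      have : (b * C + v₂ * S) ^ 2 + (b * S - v₂ * C) ^ 2 = (b ^ 2 + v₂ ^ 2) * (C ^ 2 + S ^ 2) := by
        ring
      rw [this, hCS]; linarith)
  have hd1 : α₂ / r ^ 2 * (φ₁ * φ₁) = α₂ * C ^ 2 := by rw [hCφ]; field_simp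
  have hd2 : α₂ / r ^ 2 * (φ₁ * φ₂) = α₂ * (S * C) := by rw [hCφ, hSφ]; field_simp
  have hd3 : α₂ / r ^ 2 * (φ₂ * φ₂) = α₂ * S ^ 2 := by rw [hSφ]; field_simp
  refine ⟨μ, f1, f2, f3, ?_, ?_, ?_⟩
  · rw [f4 _ (fun x _ => x) (fun _ => rfl), hCφ]
    linear_combination C * htb - t * S * m1
  · rw [f4 _ (fun _ y => y) (fun _ => rfl), hSφ]
    linear_combination S * htb + t * C * m1
  · rw [f4 _ (fun x _ => x * x) (fun _ => rfl), f4 _ (fun x y => x * y) (fun _ => rfl),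
      f4 _ (fun x y => y * x) (fun _ => rfl), f4 _ (fun _ y => y * y) (fun _ => rfl)]
    ext i j
    fin_cases i <;> fin_cases j <;>
      simp [Matrix.vecMulVec_apply]
    · rw [hd1, hα₂]
      linear_combination C ^ 2 * hm0 + S ^ 2 * hm2 - 2 * t * b * C * S * m1 + α₁ * hCS
    · rw [hd2, hα₂]
      linear_combination S * C * hm0 - S * C * hm2 + t * b * (C ^ 2 - S ^ 2) * m1
    · rw [mul_comm φ₂ φ₁, hd2, hα₂]
      linear_combination S * C * hm0 - S * C * hm2 + t * b * (C ^ 2 - S ^ 2) * m1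
    · rw [hd3, hα₂]
      linear_combination S ^ 2 * hm0 + C ^ 2 * hm2 + 2 * t * b * C * S * m1 + α₁ * hCS
end
end

section
/- Let a, b ≥ 0 be integers with a + b = k, and define f : (−1, 1) × ℝ → ℝ by f(μ, ϕ) := (√(1−μ²) cos ϕ)^a · (√(1−μ²) sin ϕ)^b. Then for all μ ∈ (−1, 1) and ϕ ∈ ℝ: ∂/∂μ[(1 − μ²)·∂f/∂μ](μ, ϕ) + (1/(1 − μ²))·∂²f/∂ϕ²(μ, ϕ) = −k(k+1)·f(μ, ϕ) + a(a−1)·(√(1−μ²) cos ϕ)^{a−2}(√(1−μ²) sin ϕ)^b + b(b−1)·(√(1−μ²) cos ϕ)^a(√(1−μ²) sin ϕ)^{b−2}, where the terms with coefficient a(a−1) resp. b(b−1) are understood to vanish when a ≤ 1 resp. b ≤ 1. -/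
open Real

noncomputable section

/-- The spherical monomial `Ω₁^a Ω₂^b` in the parametrization
`Ω = (√(1−μ²) cos ϕ, √(1−μ²) sin ϕ)`. -/
def sphMonomial (a b : ℕ) (m p : ℝ) : ℝ :=
    (Real.sqrt (1 - m ^ 2) * Real.cos p) ^ a * (Real.sqrt (1 - m ^ 2) * Real.sin p) ^ b

theorem aux_trig (a b : ℕ) (p : ℝ) :
    HasDerivAt (fun p : ℝ => Real.cos p ^ a * Real.sin p ^ b)
      (-(a : ℝ) * (Real.cos p ^ (a - 1) * Real.sin p ^ (b + 1)) +
        (b : ℝ) * (Real.cos p ^ (a + 1) * Real.sin p ^ (b - 1))) p := by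
  have h := ((Real.hasDerivAt_cos p).fun_pow a).mul ((Real.hasDerivAt_sin p).fun_pow b)
  refine h.congr_deriv ?_
  ring

theorem aux_trig2 (a b : ℕ) (p : ℝ) :
    deriv (deriv (fun p : ℝ => Real.cos p ^ a * Real.sin p ^ b)) p =
      -((a + b : ℝ)) ^ 2 * (Real.cos p ^ a * Real.sin p ^ b) +
        ((a * (a - 1) : ℕ) : ℝ) * (Real.cos p ^ (a - 2) * Real.sin p ^ b) +
        ((b * (b - 1) : ℕ) : ℝ) * (Real.cos p ^ a * Real.sin p ^ (b - 2)) := by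
  rw [show deriv (fun p : ℝ => Real.cos p ^ a * Real.sin p ^ b) = _ from
    funext fun q => (aux_trig a b q).deriv]
  have h := ((aux_trig (a - 1) (b + 1) p).const_mul (-(a : ℝ))).add
    ((aux_trig (a + 1) (b - 1) p).const_mul (b : ℝ))
  refine h.deriv.trans ?_
  have hs : Real.sin p ^ 2 = 1 - Real.cos p ^ 2 := Real.sin_sq p
  generalize Real.sin p = d at *
  generalize Real.cos p = c at *
  have hA : ((a : ℝ) * (((a - 1 : ℕ) : ℝ) * (c ^ (a - 1 - 1) * d ^ (b + 1 + 1))))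
      = ((a * (a - 1) : ℕ) : ℝ) * (c ^ (a - 2) * d ^ b) - (a : ℝ) * (a - 1) * (c ^ a * d ^ b) := by
    rcases a with _ | _ | a
    · simp
    · simp
    · have : d ^ (b + 1 + 1) = d ^ b * (1 - c ^ 2) := by rw [← hs]; ring
      simp only [this, Nat.add_sub_cancel, show a + 1 + 1 - 2 = a by omega]
      push_cast
      ring
  have hB : ((b : ℝ) * (((b - 1 : ℕ) : ℝ) * (c ^ (a + 1 + 1) * d ^ (b - 1 - 1))))
      = ((b * (b - 1) : ℕ) : ℝ) * (c ^ a * d ^ (b - 2)) - (b : ℝ) * (b - 1) * (c ^ a * d ^ b) := by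
    rcases b with _ | _ | b
    · simp
    · simp
    · have : c ^ (a + 1 + 1) = c ^ a * (1 - d ^ 2) := by rw [hs]; ring
      simp only [this, Nat.add_sub_cancel, show b + 1 + 1 - 2 = b by omega]
      push_cast
      ring
  have hC : (a : ℝ) * (c ^ (a - 1 + 1) * d ^ (b + 1 - 1)) = a * (c ^ a * d ^ b) := by
    rcases a with _ | a <;> simp
  have hD : (b : ℝ) * (c ^ (a + 1 - 1) * d ^ (b - 1 + 1)) = b * (c ^ a * d ^ b) := by
    rcases b with _ | b <;> simp
  push_cast at *
  linear_combination hA + hB - (b + 1 : ℝ) * hC - (a + 1 : ℝ) * hD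

theorem aux_sqrt (k : ℕ) (m : ℝ) (hm : 0 < 1 - m ^ 2) :
    HasDerivAt (fun m : ℝ => Real.sqrt (1 - m ^ 2) ^ k)
      (-(k : ℝ) * m * Real.sqrt (1 - m ^ 2) ^ k / (1 - m ^ 2)) m := by
  have h0 : HasDerivAt (fun m : ℝ => 1 - m ^ 2) (-(2 * m)) m := by
    simpa using (hasDerivAt_pow 2 m).const_sub 1
  refine ((h0.sqrt hm.ne').fun_pow k).congr_deriv ?_
  have hs : 0 < Real.sqrt (1 - m ^ 2) := Real.sqrt_pos.2 hm
  have h2 : Real.sqrt (1 - m ^ 2) ^ 2 = 1 - m ^ 2 := Real.sq_sqrt hm.le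
  generalize Real.sqrt (1 - m ^ 2) = s at *
  rw [← h2]
  rcases k with _ | k
  · simp
  · simp only [Nat.add_sub_cancel]
    field_simp
    ring

theorem aux_mu (k : ℕ) (C m : ℝ) (hm : 0 < 1 - m ^ 2) :
    deriv (fun m' => (1 - m' ^ 2) * deriv (fun m'' : ℝ => Real.sqrt (1 - m'' ^ 2) ^ k * C) m') m =
      (-(k : ℝ) * (k + 1) + k ^ 2 / (1 - m ^ 2)) * (Real.sqrt (1 - m ^ 2) ^ k * C) := by
  have hev : (fun m' => (1 - m' ^ 2) * deriv (fun m'' : ℝ => Real.sqrt (1 - m'' ^ 2) ^ k * C) m')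
      =ᶠ[nhds m] fun m' => (-(k : ℝ) * C) * (m' * Real.sqrt (1 - m' ^ 2) ^ k) := by
    have ho : IsOpen {x : ℝ | 0 < 1 - x ^ 2} := isOpen_lt (by fun_prop) (by fun_prop)
    filter_upwards [ho.mem_nhds hm] with x hx
    have hx' : (0 : ℝ) < 1 - x ^ 2 := hx
    rw [((aux_sqrt k x hx').mul_const C).deriv]
    field_simp
  rw [hev.deriv_eq]
  refine (((hasDerivAt_id' m).fun_mul (aux_sqrt k m hm)).const_mul (-(k : ℝ) * C)).deriv.trans ?_
  field_simp
  ring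

theorem aux_mono (a b : ℕ) (m p : ℝ) : sphMonomial a b m p =
    Real.sqrt (1 - m ^ 2) ^ (a + b) * (Real.cos p ^ a * Real.sin p ^ b) := by
  unfold sphMonomial
  ring

/-- Action of the Laplace-Beltrami operator
`Δf = ∂_μ((1−μ²) ∂_μ f) + (1−μ²)⁻¹ ∂²_ϕ f` on the spherical monomials `Ω₁^a Ω₂^b` with
`a + b = k`:
`Δ(Ω₁^a Ω₂^b) = −k(k+1) Ω₁^a Ω₂^b + a(a−1) Ω₁^{a−2} Ω₂^b + b(b−1) Ω₁^a Ω₂^{b−2}`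
(the last two terms vanish when `a ≤ 1` resp. `b ≤ 1`). -/
theorem laplaceBeltrami_monomial (a b k : ℕ) (hk : a + b = k)
    (m p : ℝ) (hm : m ∈ Set.Ioo (-1 : ℝ) 1) :
    deriv (fun m' => (1 - m' ^ 2) * deriv (fun m'' => sphMonomial a b m'' p) m') m +
        (1 / (1 - m ^ 2)) * deriv (deriv (fun p' => sphMonomial a b m p')) p =
      -((k : ℝ) * ((k : ℝ) + 1)) * sphMonomial a b m p +
        ((a * (a - 1) : ℕ) : ℝ) * sphMonomial (a - 2) b m p +
        ((b * (b - 1) : ℕ) : ℝ) * sphMonomial a (b - 2) m p := by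
  have hm' : 0 < 1 - m ^ 2 := by nlinarith [hm.1, hm.2]
  have h2 : Real.sqrt (1 - m ^ 2) ^ 2 = 1 - m ^ 2 := Real.sq_sqrt hm'.le
  subst hk
  simp only [aux_mono]
  rw [aux_mu _ _ _ hm']
  have e : deriv (deriv fun p' => Real.sqrt (1 - m ^ 2) ^ (a + b) *
      (Real.cos p' ^ a * Real.sin p' ^ b)) p = Real.sqrt (1 - m ^ 2) ^ (a + b) *
      deriv (deriv fun p' => (Real.cos p' ^ a * Real.sin p' ^ b)) p := by
    simp only [deriv_const_mul_field']
  rw [e, aux_trig2]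
  have hA : ((a * (a - 1) : ℕ) : ℝ) * Real.sqrt (1 - m ^ 2) ^ (a + b) =
      ((a * (a - 1) : ℕ) : ℝ) * Real.sqrt (1 - m ^ 2) ^ (a - 2 + b) * (1 - m ^ 2) := by
    rcases a with _ | _ | a
    · simp
    · simp
    · rw [show a + 1 + 1 - 2 + b = a + b by omega]
      nth_rewrite 3 [← h2]
      ring
  have hB : ((b * (b - 1) : ℕ) : ℝ) * Real.sqrt (1 - m ^ 2) ^ (a + b) =
      ((b * (b - 1) : ℕ) : ℝ) * Real.sqrt (1 - m ^ 2) ^ (a + (b - 2)) * (1 - m ^ 2) := by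
    rcases b with _ | _ | b
    · simp
    · simp
    · rw [show b + 1 + 1 - 2 = b by omega]
      nth_rewrite 3 [← h2]
      ring
  generalize ((a * (a - 1) : ℕ) : ℝ) = A at *
  generalize ((b * (b - 1) : ℕ) : ℝ) = B at *
  generalize Real.sqrt (1 - m ^ 2) = s at *
  generalize 1 - m ^ 2 = w at *
  push_cast
  field_simp
  linear_combination (Real.cos p ^ (a - 2) * Real.sin p ^ b) * hA +
    (Real.cos p ^ a * Real.sin p ^ (b - 2)) * hB
end
end

section
/- For each sign pattern ε = (ε₁, ε₂) ∈ {−1, +1}², let a(ε) ∈ ℝ and b(ε) ∈ ℝ², and let the open quadrant be S_ε° := {ω ∈ S² : ε₁ω₁ > 0, ε₂ω₂ > 0}. Suppose f : S² → ℝ is continuous and f(ω) = exp(a(ε) + b(ε)·Ω(ω)) for all ω ∈ S_ε° and all ε. Then (i) all four values a(ε) are equal, and (ii) for quadrants adjacent across a boundary on which a component of Ω does not vanish, the corresponding component of b agrees: b(+,+)₁ = b(+,−)₁, b(−,+)₁ = b(−,−)₁, b(+,+)₂ = b(−,+)₂ and b(+,−)₂ = b(−,−)₂. -/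
open Real

noncomputable section

theorem quadrant_boundary_value
    (f : EuclideanSpace ℝ (Fin 3) → ℝ)
    (hf : ContinuousOn f (Metric.sphere (0 : EuclideanSpace ℝ (Fin 3)) 1))
    (s t a b c x y : ℝ) (hs : s ^ 2 = 1) (ht : t ^ 2 = 1)
    (h : ∀ ω ∈ Metric.sphere (0 : EuclideanSpace ℝ (Fin 3)) 1,
      0 < s * ω 0 → 0 < t * ω 1 → f ω = Real.exp (a + b * ω 0 + c * ω 1))
    (hx : 0 ≤ s * x) (hy : 0 ≤ t * y) (hx2 : s * x ≤ 1 / 2) (hy2 : t * y ≤ 1 / 2) :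
    f !₂[x, y, Real.sqrt (1 - x ^ 2 - y ^ 2)] = Real.exp (a + b * x + c * y) := by
  let g : ℝ → EuclideanSpace ℝ (Fin 3) := fun r =>
    !₂[x + r * s, y + r * t, Real.sqrt (1 - (x + r * s) ^ 2 - (y + r * t) ^ 2)]
  have hg : Continuous g := by
    refine (PiLp.continuous_toLp 2 _).comp ?_
    refine continuous_pi fun i => ?_
    fin_cases i <;> simp <;> fun_prop
  have hmem : ∀ r : ℝ, 0 ≤ r → r < 1 / 8 →
      g r ∈ Metric.sphere (0 : EuclideanSpace ℝ (Fin 3)) 1 := by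
    intro r h0 h1
    have e1 : (x + r * s) ^ 2 = (s * x + r) ^ 2 := by linear_combination (r ^ 2 - x ^ 2) * hs
    have e2 : (y + r * t) ^ 2 = (t * y + r) ^ 2 := by linear_combination (r ^ 2 - y ^ 2) * ht
    have l1 : (s * x + r) ^ 2 ≤ (5 / 8) ^ 2 := pow_le_pow_left₀ (by linarith) (by linarith) 2
    have l2 : (t * y + r) ^ 2 ≤ (5 / 8) ^ 2 := pow_le_pow_left₀ (by linarith) (by linarith) 2
    have hn : 0 ≤ 1 - (x + r * s) ^ 2 - (y + r * t) ^ 2 := by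
      rw [e1, e2]; norm_num at l1 l2; linarith
    rw [mem_sphere_zero_iff_norm, EuclideanSpace.norm_eq, Real.sqrt_eq_one]
    simp only [g, Fin.sum_univ_three, Real.norm_eq_abs, sq_abs]
    simp [Real.sq_sqrt hn]
  have h0 : g 0 = !₂[x, y, Real.sqrt (1 - x ^ 2 - y ^ 2)] := by simp [g]
  have hev : ∀ᶠ r : ℝ in nhdsWithin 0 (Set.Ioi 0), r ∈ Set.Ioo (0 : ℝ) (1 / 8) :=
    Ioo_mem_nhdsGT (by norm_num)
  have T1 : Filter.Tendsto (fun r => f (g r)) (nhdsWithin 0 (Set.Ioi 0)) (nhds (f (g 0))) := by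
    refine (hf (g 0) (hmem 0 le_rfl (by norm_num))).tendsto.comp ?_
    refine tendsto_nhdsWithin_iff.2 ⟨(hg.tendsto 0).mono_left nhdsWithin_le_nhds, ?_⟩
    filter_upwards [hev] with r hr using hmem r hr.1.le hr.2
  have T2 : Filter.Tendsto (fun r : ℝ => Real.exp (a + b * (x + r * s) + c * (y + r * t)))
      (nhdsWithin 0 (Set.Ioi 0)) (nhds (Real.exp (a + b * x + c * y))) := by
    have hc : Continuous (fun r : ℝ => Real.exp (a + b * (x + r * s) + c * (y + r * t))) := by
      fun_prop
    have := (hc.tendsto 0).mono_left (nhdsWithin_le_nhds (s := Set.Ioi 0))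
    simpa using this
  rw [← h0]
  refine tendsto_nhds_unique T1 (T2.congr' ?_)
  filter_upwards [hev] with r hr
  have e1 : s * (x + r * s) = s * x + r := by linear_combination r * hs
  have e2 : t * (y + r * t) = t * y + r := by linear_combination r * ht
  have := h (g r) (hmem r hr.1.le hr.2)
    (by simp only [g]; simp [e1]; linarith [hr.1]) (by simp only [g]; simp [e2]; linarith [hr.1])
  rw [this]; simp [g]

/-- Continuity requirement for the quadrant-wise minimum-entropy ansatz: if a continuous function
on the unit sphere coincides on each open quadrant `S_ε°` with `exp(a(ε) + b(ε)·Ω)`, then all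
four multipliers `a(ε)` agree, and for quadrants adjacent across a boundary on which a component
of `Ω` does not vanish, the corresponding component of `b` agrees. -/
theorem mixed_moment_ansatz_continuity
    (f : EuclideanSpace ℝ (Fin 3) → ℝ)
    (hf : ContinuousOn f (Metric.sphere (0 : EuclideanSpace ℝ (Fin 3)) 1))
    (app amp amm apm : ℝ) (bpp bmp bmm bpm : ℝ × ℝ)
    (hpp : ∀ ω ∈ Metric.sphere (0 : EuclideanSpace ℝ (Fin 3)) 1,
      0 < ω 0 → 0 < ω 1 → f ω = Real.exp (app + bpp.1 * ω 0 + bpp.2 * ω 1))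
    (hmp : ∀ ω ∈ Metric.sphere (0 : EuclideanSpace ℝ (Fin 3)) 1,
      ω 0 < 0 → 0 < ω 1 → f ω = Real.exp (amp + bmp.1 * ω 0 + bmp.2 * ω 1))
    (hmm : ∀ ω ∈ Metric.sphere (0 : EuclideanSpace ℝ (Fin 3)) 1,
      ω 0 < 0 → ω 1 < 0 → f ω = Real.exp (amm + bmm.1 * ω 0 + bmm.2 * ω 1))
    (hpm : ∀ ω ∈ Metric.sphere (0 : EuclideanSpace ℝ (Fin 3)) 1,
      0 < ω 0 → ω 1 < 0 → f ω = Real.exp (apm + bpm.1 * ω 0 + bpm.2 * ω 1)) :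
    (app = amp ∧ app = amm ∧ app = apm) ∧
      bpp.1 = bpm.1 ∧ bmp.1 = bmm.1 ∧ bpp.2 = bmp.2 ∧ bpm.2 = bmm.2 := by
  have PP := fun x y => quadrant_boundary_value f hf 1 1 app bpp.1 bpp.2 x y (by norm_num)
    (by norm_num) (fun ω hω h1 h2 => hpp ω hω (by linarith) (by linarith))
  have MP := fun x y => quadrant_boundary_value f hf (-1) 1 amp bmp.1 bmp.2 x y (by norm_num)
    (by norm_num) (fun ω hω h1 h2 => hmp ω hω (by linarith) (by linarith))
  have MM := fun x y => quadrant_boundary_value f hf (-1) (-1) amm bmm.1 bmm.2 x y (by norm_num)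
    (by norm_num) (fun ω hω h1 h2 => hmm ω hω (by linarith) (by linarith))
  have PM := fun x y => quadrant_boundary_value f hf 1 (-1) apm bpm.1 bpm.2 x y (by norm_num)
    (by norm_num) (fun ω hω h1 h2 => hpm ω hω (by linarith) (by linarith))
  have k1 := Real.exp_injective ((PP (0) (0) (by norm_num) (by norm_num) (by norm_num) (by norm_num)).symm.trans
    (MP (0) (0) (by norm_num) (by norm_num) (by norm_num) (by norm_num)))
  have k2 := Real.exp_injective ((PP (0) (0) (by norm_num) (by norm_num) (by norm_num) (by norm_num)).symm.trans
    (MM (0) (0) (by norm_num) (by norm_num) (by norm_num) (by norm_num)))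
  have k3 := Real.exp_injective ((PP (0) (0) (by norm_num) (by norm_num) (by norm_num) (by norm_num)).symm.trans
    (PM (0) (0) (by norm_num) (by norm_num) (by norm_num) (by norm_num)))
  have k4 := Real.exp_injective ((PP (1 / 2) (0) (by norm_num) (by norm_num) (by norm_num) (by norm_num)).symm.trans
    (PM (1 / 2) (0) (by norm_num) (by norm_num) (by norm_num) (by norm_num)))
  have k5 := Real.exp_injective ((MP (-1 / 2) (0) (by norm_num) (by norm_num) (by norm_num) (by norm_num)).symm.trans
    (MM (-1 / 2) (0) (by norm_num) (by norm_num) (by norm_num) (by norm_num)))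
  have k6 := Real.exp_injective ((PP (0) (1 / 2) (by norm_num) (by norm_num) (by norm_num) (by norm_num)).symm.trans
    (MP (0) (1 / 2) (by norm_num) (by norm_num) (by norm_num) (by norm_num)))
  have k7 := Real.exp_injective ((PM (0) (-1 / 2) (by norm_num) (by norm_num) (by norm_num) (by norm_num)).symm.trans
    (MM (0) (-1 / 2) (by norm_num) (by norm_num) (by norm_num) (by norm_num)))
  refine ⟨⟨?_, ?_, ?_⟩, ?_, ?_, ?_, ?_⟩ <;> linarith
end
end
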